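/- arXiv:1602.02311 — 3 statements merged into one kernel-verified Lean document; each statement's English description precedes it below -/
import Mathlib

section
/- As α → 0⁺, the Rényi divergence D_α[p||q] converges to −log ∫_{{θ : p(θ) > 0}} q(θ) dμ(θ). Moreover this limit equals 0 if and only if ∫_{{θ : p(θ) > 0}} q dμ = 1, i.e., if and only if the q-mass is concentrated on the support of p. -/
/-!
The integrand `p ^ α * q ^ (1 - α)` vanishes off the support of `p` once `α ≠ 0`, and tends to `q`
on it as `α → 0⁺`. For `0 < α < 1` the weighted arithmetic-geometric mean inequality bounds it by
`α * p + (1 - α) * q ≤ p + q`, which is integrable, so dominated convergence gives the limit of the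
integrals. As this limit is positive, the logarithm is continuous there, and the prefactor
`(α - 1)⁻¹` tends to `-1`. For a positive real, a vanishing logarithm characterizes the value one.
-/

open MeasureTheory Filter Set
open scoped Topology

/-- Rényi's α-divergence between densities `p` and `q` with respect to a measure `μ`:
`D_α[p||q] = (α - 1)⁻¹ * log ∫ p^α q^(1-α) dμ`. -/
noncomputable def renyiDiv {Θ : Type*} [MeasurableSpace Θ] (μ : Measure Θ)
    (p q : Θ → ℝ) (α : ℝ) : ℝ :=
  (α - 1)⁻¹ * Real.log (∫ θ, p θ ^ α * q θ ^ (1 - α) ∂μ)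

/-- As `α → 0⁺`, `x ^ α * y ^ (1 - α)` tends to `y` if `x > 0` and to `0` if `x = 0`: the value
`0 ^ 0 = 1` at `α = 0` is not seen by the one-sided limit. -/
theorem tendsto_rpow_mul_rpow_indicator {Θ : Type*} (p q : Θ → ℝ) (θ : Θ)
    (hp : 0 ≤ p θ) :
    Tendsto (fun α : ℝ => p θ ^ α * q θ ^ (1 - α)) (𝓝[>] (0 : ℝ))
      (𝓝 ({θ | 0 < p θ}.indicator q θ)) := by
  rcases hp.eq_or_lt with h | h
  · have h0 : {θ | 0 < p θ}.indicator q θ = 0 := by simp [← h]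
    rw [h0]
    refine tendsto_const_nhds.congr' ?_
    filter_upwards [self_mem_nhdsWithin] with α hα
    rw [← h, Real.zero_rpow (ne_of_gt hα), zero_mul]
  · have h0 : {θ | 0 < p θ}.indicator q θ = p θ ^ (0 : ℝ) * q θ ^ (1 - (0 : ℝ)) := by
      simp [h]
    rw [h0]
    refine Tendsto.mono_left ?_ nhdsWithin_le_nhds
    have h1 : Tendsto (fun α : ℝ => 1 - α) (𝓝 0) (𝓝 (1 - 0)) :=
      tendsto_const_nhds.sub tendsto_id
    -- Continuity in the exponent holds for `q θ = 0` as well, since the limit exponent is `1 > 0`.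
    exact (tendsto_const_nhds.rpow tendsto_id (Or.inl h.ne')).mul
      (tendsto_const_nhds.rpow h1 (Or.inr (by norm_num)))

theorem tendsto_integral_rpow_mul_rpow {Θ : Type*} [MeasurableSpace Θ] (μ : Measure Θ)
    (p q : Θ → ℝ) (hpm : Measurable p) (hqm : Measurable q)
    (hp0 : ∀ θ, 0 ≤ p θ) (hq0 : ∀ θ, 0 ≤ q θ)
    (hpi : Integrable p μ) (hqi : Integrable q μ) :
    Tendsto (fun α : ℝ => ∫ θ, p θ ^ α * q θ ^ (1 - α) ∂μ) (𝓝[>] (0 : ℝ))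
      (𝓝 (∫ θ in {θ | 0 < p θ}, q θ ∂μ)) := by
  rw [← integral_indicator (measurableSet_lt measurable_const hpm)]
  refine tendsto_integral_filter_of_dominated_convergence (fun θ => p θ + q θ) ?_ ?_
    (hpi.add hqi) (ae_of_all _ fun θ => tendsto_rpow_mul_rpow_indicator p q θ (hp0 θ))
  · exact Eventually.of_forall fun α =>
      ((hpm.pow_const α).mul (hqm.pow_const (1 - α))).aestronglyMeasurable
  · filter_upwards [Ioo_mem_nhdsGT (zero_lt_one' ℝ)] with α hα
    refine ae_of_all _ fun θ => ?_
    rw [Real.norm_of_nonneg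
      (mul_nonneg (Real.rpow_nonneg (hp0 θ) _) (Real.rpow_nonneg (hq0 θ) _))]
    have h := Real.geom_mean_le_arith_mean2_weighted hα.1.le (sub_nonneg.2 hα.2.le)
      (hp0 θ) (hq0 θ) (by ring)
    nlinarith [hp0 θ, hq0 θ, hα.1, hα.2, mul_nonneg hα.1.le (hq0 θ),
      mul_nonneg (sub_nonneg.2 hα.2.le) (hp0 θ)]

/-- As `α → 0⁺`, the Rényi divergence `D_α[p||q]` converges to
`-log ∫_{p > 0} q dμ`, and this limit is zero if and only if the `q`-mass of the support
of `p` equals one. -/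
theorem renyiDiv_tendsto_zero_order {Θ : Type*} [MeasurableSpace Θ] (μ : Measure Θ)
    [SigmaFinite μ]
    (p q : Θ → ℝ) (hpm : Measurable p) (hqm : Measurable q)
    (hp0 : ∀ θ, 0 ≤ p θ) (hq0 : ∀ θ, 0 ≤ q θ)
    (hpi : Integrable p μ) (hqi : Integrable q μ)
    (hp1 : ∫ θ, p θ ∂μ = 1) (hq1 : ∫ θ, q θ ∂μ = 1)
    (hpos : 0 < ∫ θ in {θ | 0 < p θ}, q θ ∂μ) :
    Tendsto (fun α => renyiDiv μ p q α) (𝓝[>] (0 : ℝ))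
        (𝓝 (-Real.log (∫ θ in {θ | 0 < p θ}, q θ ∂μ))) ∧
      (-Real.log (∫ θ in {θ | 0 < p θ}, q θ ∂μ) = 0 ↔
        ∫ θ in {θ | 0 < p θ}, q θ ∂μ = 1) := by
  constructor
  · have hc : Tendsto (fun α : ℝ => (α - 1)⁻¹) (𝓝[>] (0 : ℝ)) (𝓝 (-1)) := by
      have h : ContinuousAt (fun α : ℝ => (α - 1)⁻¹) 0 :=
        (continuousAt_id.sub continuousAt_const).inv₀ (by norm_num)
      have h' := h.tendsto.mono_left (nhdsWithin_le_nhds (s := Ioi 0))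
      norm_num at h'
      exact h'
    have h := hc.mul
      ((tendsto_integral_rpow_mul_rpow μ p q hpm hqm hp0 hq0 hpi hqi).log hpos.ne')
    rw [neg_one_mul] at h
    exact h
  · rw [neg_eq_zero]
    exact ⟨Real.eq_one_of_pos_of_log_eq_zero hpos, fun h => by rw [h, Real.log_one]⟩
end

section
/- Suppose p = 0 μ-a.e. on {q = 0} (absolute continuity of p with respect to q), the Kullback–Leibler divergence KL[p||q] = ∫ p log(p/q) dμ is finite, and D_α[p||q] is finite for all α in a neighbourhood of 1. Then lim_{α → 1} D_α[p||q] = KL[p||q]; i.e., the Kullback–Leibler divergence is recovered as the order-1 limit of Rényi's α-divergence. -/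
/-!
Let `ν` have density `p` with respect to `μ`, and let `X = log (p / q)`. Almost everywhere
`p ^ (1 + t) * q ^ (-t) = p * exp (t * X)`, so `∫ p ^ α * q ^ (1 - α) ∂μ` is the moment
generating function `M` of `X` under the probability measure `ν`, evaluated at `α - 1`.
Finiteness near `α = 1` puts `0` in the interior of the domain of `M`, so `M` is differentiable
at `0` with `M 0 = 1` and `M' 0 = ∫ X ∂ν = KL[p||q]`. The Rényi divergence is the difference
quotient of `log M` at `0`, which tends to `M' 0 / M 0`.
-/

open MeasureTheory Filter Set
open scoped Topology

/-- Exponential tilting form of the Rényi integrand. The condition `1 + t ≠ 0` excludes the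
junk value `0 ^ 0 = 1` where `p` vanishes. -/
lemma rpow_mul_rpow_eq_mul_exp {a b t : ℝ} (ha : 0 ≤ a) (hb : 0 ≤ b) (hab : b = 0 → a = 0)
    (ht : 1 + t ≠ 0) :
    a ^ (1 + t) * b ^ (1 - (1 + t)) = a * Real.exp (t * Real.log (a / b)) := by
  rcases ha.eq_or_lt with rfl | ha'
  · simp [Real.zero_rpow ht]
  · have hb' : 0 < b := hb.lt_of_ne fun h => ha'.ne' (hab h.symm)
    rw [Real.rpow_def_of_pos ha', Real.rpow_def_of_pos hb', Real.log_div ha'.ne' hb'.ne',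
      ← Real.exp_add]
    calc Real.exp (Real.log a * (1 + t) + Real.log b * (1 - (1 + t)))
        = Real.exp (Real.log a + t * (Real.log a - Real.log b)) := by congr 1; ring
      _ = a * Real.exp (t * (Real.log a - Real.log b)) := by
        rw [Real.exp_add, Real.exp_log ha']

/-- If `p ≪ q`, the KL divergence `KL[p||q] = ∫ p log(p/q) dμ` is finite, and `D_α[p||q]`
is finite for all `α` in a neighbourhood of `1`, then `D_α[p||q] → KL[p||q]` as `α → 1`:
the Kullback–Leibler divergence is the order-1 limit of Rényi's α-divergence. -/
theorem renyiDiv_tendsto_kl {Θ : Type*} [MeasurableSpace Θ] (μ : Measure Θ) [SigmaFinite μ]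
    (p q : Θ → ℝ) (hpm : Measurable p) (hqm : Measurable q)
    (hp0 : ∀ θ, 0 ≤ p θ) (hq0 : ∀ θ, 0 ≤ q θ)
    (hpi : Integrable p μ) (hqi : Integrable q μ)
    (hp1 : ∫ θ, p θ ∂μ = 1) (hq1 : ∫ θ, q θ ∂μ = 1)
    (habs : ∀ᵐ θ ∂μ, q θ = 0 → p θ = 0)
    (hKL : Integrable (fun θ => p θ * Real.log (p θ / q θ)) μ)
    (hfin : ∃ ε > (0 : ℝ), ∀ α : ℝ, α ≠ 1 → |α - 1| < ε →
      Integrable (fun θ => p θ ^ α * q θ ^ (1 - α)) μ ∧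
        0 < ∫ θ, p θ ^ α * q θ ^ (1 - α) ∂μ) :
    Tendsto (fun α => renyiDiv μ p q α) (𝓝[≠] (1 : ℝ))
      (𝓝 (∫ θ, p θ * Real.log (p θ / q θ) ∂μ)) := by
  obtain ⟨ε, hε, hfin⟩ := hfin
  set X : Θ → ℝ := fun θ => Real.log (p θ / q θ) with hX
  set ν : Measure Θ := μ.withDensity (fun θ => ENNReal.ofReal (p θ)) with hν
  have hdm : Measurable (fun θ => ENNReal.ofReal (p θ)) := hpm.ennreal_ofReal
  have hdt : ∀ᵐ θ ∂μ, ENNReal.ofReal (p θ) < ⊤ := ae_of_all _ fun _ => ENNReal.ofReal_lt_top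
  have hint (f : Θ → ℝ) : ∫ θ, f θ ∂ν = ∫ θ, p θ * f θ ∂μ := by
    rw [hν, integral_withDensity_eq_integral_toReal_smul hdm hdt]
    simp [ENNReal.toReal_ofReal (hp0 _)]
  have hintble (f : Θ → ℝ) : Integrable f ν ↔ Integrable (fun θ => p θ * f θ) μ := by
    rw [hν, integrable_withDensity_iff_integrable_smul' hdm hdt]
    simp [ENNReal.toReal_ofReal (hp0 _)]
  have htilt {t : ℝ} (ht : 1 + t ≠ 0) :
      (fun θ => p θ ^ (1 + t) * q θ ^ (1 - (1 + t))) =ᵐ[μ]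
        fun θ => p θ * Real.exp (t * X θ) := by
    filter_upwards [habs] with θ hθ
    exact rpow_mul_rpow_eq_mul_exp (hp0 θ) (hq0 θ) hθ ht
  have hmem : (0 : ℝ) ∈ interior (ProbabilityTheory.integrableExpSet X ν) := by
    rw [mem_interior_iff_mem_nhds, Metric.mem_nhds_iff]
    -- Radius at most `1` keeps the exponent `1 + t` of `p` positive.
    refine ⟨min ε 1, lt_min hε one_pos, fun t ht => ?_⟩
    rw [mem_ball_zero_iff, Real.norm_eq_abs, lt_min_iff] at ht
    have ht1 : 1 + t ≠ 0 := (by linarith [(abs_lt.1 ht.2).1] : (0 : ℝ) < 1 + t).ne'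
    change Integrable (fun θ => Real.exp (t * X θ)) ν
    rw [hintble]
    -- The exponent `t = 0`, not covered by the finiteness hypothesis, reduces to `∫ p dμ < ∞`.
    rcases eq_or_ne t 0 with rfl | h0
    · simpa using hpi
    · exact (hfin (1 + t) (by simpa using h0) (by simpa using ht.1)).1.congr (htilt ht1)
  have hmgf0 : ProbabilityTheory.mgf X ν 0 = 1 := by
    simp only [ProbabilityTheory.mgf]
    rw [hint]
    simpa using hp1
  have hderiv := ProbabilityTheory.hasDerivAt_mgf hmem
  have hmean : ∫ θ, X θ * Real.exp (0 * X θ) ∂ν = ∫ θ, p θ * Real.log (p θ / q θ) ∂μ := by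
    rw [hint]
    simp [hX]
  rw [hmean] at hderiv
  have hlog := hderiv.log (by rw [hmgf0]; exact one_ne_zero)
  rw [hmgf0, div_one, hasDerivAt_iff_tendsto_slope] at hlog
  have hshift : Tendsto (fun α : ℝ => α - 1) (𝓝[≠] 1) (𝓝[≠] 0) := by
    refine tendsto_nhdsWithin_iff.2 ⟨?_, ?_⟩
    · exact ((continuous_id.sub continuous_const).tendsto' (1 : ℝ) 0 (by simp)).mono_left
        nhdsWithin_le_nhds
    · filter_upwards [self_mem_nhdsWithin] with α hα
      exact sub_ne_zero.2 hα
  refine (hlog.comp hshift).congr' ?_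
  filter_upwards [nhdsWithin_le_nhds (lt_mem_nhds (zero_lt_one' ℝ))] with α hα
  have hα' : 1 + (α - 1) ≠ 0 := (by linarith : (0 : ℝ) < 1 + (α - 1)).ne'
  have hI := integral_congr_ae (htilt hα')
  rw [← hint, add_sub_cancel] at hI
  simp only [Function.comp, slope_def_field, renyiDiv, hI, hmgf0, Real.log_one, sub_zero]
  rw [div_eq_inv_mul, ProbabilityTheory.mgf]
end

section
/- (Theorem 1, limit at α = 1) Suppose q = 0 μ-a.e. on {f = 0}, ∫ q |log(f/q)| dμ < ∞, and L_α(q) is finite for all α in a punctured neighbourhood of 1. Then lim_{α → 1} L_α(q) = L_VI(q) = ∫ q log(f/q) dμ; i.e., the variational Rényi bound recovers the standard variational lower bound as α → 1. -/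
/-!
With the measure `ν = q · μ` and the log-ratio `X = log (f / q)`, the integral inside
`L_α(q)` is the moment generating function of `X` under `ν` at `t = 1 - α`: the two integrands
agree where `q = 0`, and where `q > 0` absolute continuity gives `f > 0` almost everywhere.
Hence `L_α(q) = t⁻¹ log (mgf X ν t)` is the difference quotient at `0` of the cumulant
generating function `log (mgf X ν ·)`, which vanishes at `0` because `q` has total mass one.
Finiteness of `L_α(q)` near `α = 1` puts `0` in the interior of the domain of the mgf, so
the cumulant generating function is differentiable there, with derivative
`∫ X ∂ν = ∫ q log (f / q) ∂μ`.
-/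

open MeasureTheory Filter Set
open scoped Topology

/-- The variational Rényi bound for an approximate posterior density `q` and an
unnormalised joint density `f`:
`L_α(q) = (1-α)⁻¹ * log ∫ q (f/q)^(1-α) dμ`. -/
noncomputable def vrBound {Θ : Type*} [MeasurableSpace Θ] (μ : Measure Θ)
    (q f : Θ → ℝ) (α : ℝ) : ℝ :=
  (1 - α)⁻¹ * Real.log (∫ θ, q θ * (f θ / q θ) ^ (1 - α) ∂μ)

open ProbabilityTheory

/-- Theorem 1 (limit at `α = 1`): if `q = 0` μ-a.e. on `{f = 0}`,
`∫ q |log(f/q)| dμ < ∞`, and `L_α(q)` is finite in a punctured neighbourhood of `1`,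
then `L_α(q) → L_VI(q) = ∫ q log(f/q) dμ` as `α → 1`: the variational Rényi bound
recovers the standard variational lower bound. -/
theorem vrBound_tendsto_elbo {Θ : Type*} [MeasurableSpace Θ] (μ : Measure Θ)
    [SigmaFinite μ]
    (q f : Θ → ℝ) (hqm : Measurable q) (hfm : Measurable f)
    (hq0 : ∀ θ, 0 ≤ q θ) (hf0 : ∀ θ, 0 ≤ f θ)
    (hqi : Integrable q μ) (hq1 : ∫ θ, q θ ∂μ = 1)
    (hfi : Integrable f μ) (hZ : 0 < ∫ θ, f θ ∂μ)
    (habs : ∀ᵐ θ ∂μ, f θ = 0 → q θ = 0)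
    (hint : Integrable (fun θ => q θ * |Real.log (f θ / q θ)|) μ)
    (hfin : ∃ ε > (0 : ℝ), ∀ α : ℝ, α ≠ 1 → |α - 1| < ε →
      Integrable (fun θ => q θ * (f θ / q θ) ^ (1 - α)) μ ∧
        0 < ∫ θ, q θ * (f θ / q θ) ^ (1 - α) ∂μ) :
    Tendsto (fun α => vrBound μ q f α) (𝓝[≠] (1 : ℝ))
      (𝓝 (∫ θ, q θ * Real.log (f θ / q θ) ∂μ)) := by
  obtain ⟨ε, hε, hfin⟩ := hfin
  have hqn : Measurable fun θ => (q θ).toNNReal := hqm.real_toNNReal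
  set X : Θ → ℝ := fun θ => Real.log (f θ / q θ) with hX
  set ν : Measure Θ := μ.withDensity fun θ => ((q θ).toNNReal : ENNReal) with hν
  have hintν (g : Θ → ℝ) : ∫ θ, g θ ∂ν = ∫ θ, q θ * g θ ∂μ := by
    rw [hν, integral_withDensity_eq_integral_smul hqn]
    refine integral_congr_ae (.of_forall fun θ => ?_)
    simp [NNReal.smul_def, hq0 θ]
  have hiν (g : Θ → ℝ) : Integrable g ν ↔ Integrable (fun θ => q θ * g θ) μ := by
    rw [hν, integrable_withDensity_iff_integrable_smul hqn]
    refine integrable_congr (.of_forall fun θ => ?_)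
    simp [NNReal.smul_def, hq0 θ]
  have hexp (t : ℝ) : (fun θ => q θ * (f θ / q θ) ^ t) =ᵐ[μ]
      fun θ => q θ * Real.exp (t * X θ) := by
    filter_upwards [habs] with θ hθ
    rcases (hq0 θ).eq_or_lt with h | h
    · simp [← h]
    · have hf : 0 < f θ := (hf0 θ).lt_of_ne fun h' => h.ne' (hθ h'.symm)
      rw [Real.rpow_def_of_pos (div_pos hf h), mul_comm t]
  have hmgf (t : ℝ) : mgf X ν t = ∫ θ, q θ * (f θ / q θ) ^ t ∂μ := by
    rw [mgf, hintν, integral_congr_ae (hexp t)]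
  have hmem : (0 : ℝ) ∈ interior (integrableExpSet X ν) := by
    rw [mem_interior_iff_mem_nhds]
    filter_upwards [Metric.ball_mem_nhds (0 : ℝ) hε] with t ht
    rw [integrableExpSet, Set.mem_ofPred_eq, hiν]
    by_cases h0 : t = 0
    · simpa [h0] using hqi
    · have h := (hfin (1 - t) (by simpa using h0) (by simpa using ht)).1
      rw [sub_sub_cancel] at h
      exact h.congr (hexp t)
  have hmgf0 : mgf X ν 0 = 1 := by simpa [hmgf] using hq1
  have hderiv : HasDerivAt (fun t => Real.log (mgf X ν t)) (∫ θ, q θ * X θ ∂μ) 0 := by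
    have h := (hasDerivAt_mgf hmem).log (by simp [hmgf0])
    simpa [hmgf0, hintν] using h
  have hslope := hasDerivAt_iff_tendsto_slope_zero.1 hderiv
  have hsub : Tendsto (fun α : ℝ => 1 - α) (𝓝[≠] 1) (𝓝[≠] 0) := by
    refine tendsto_nhdsWithin_iff.2 ⟨?_, ?_⟩
    · have h : Tendsto (fun α : ℝ => 1 - α) (𝓝 1) (𝓝 (1 - 1)) :=
        (continuous_const.sub continuous_id).tendsto 1
      rw [sub_self] at h
      exact h.mono_left nhdsWithin_le_nhds
    · filter_upwards [self_mem_nhdsWithin] with α hα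
      exact sub_ne_zero.2 (Ne.symm hα)
  refine (hslope.comp hsub).congr fun α => ?_
  simp only [Function.comp_apply, zero_add, hmgf0, Real.log_one, sub_zero, smul_eq_mul]
  rw [vrBound, hmgf]
end
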